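/- Consider the UE's per-slot power minimization problem: minimize F(f,P) = Vκf³ + VP − b·f − a·∫₀^∞ ln(1 + P·h/(N₀W + I)) dμ(I) over f ≥ 0, P ≥ 0 subject to κf³ + P ≤ Pmax, where V ≥ 0, κ > 0, b > 0, a ≥ 0, h > 0, N₀W > 0, Pmax > 0, and μ is a probability measure on [0,∞). Suppose γ* ≥ 0, f* = √(b/(3κ(V+γ*))) (with V + γ* > 0), and P* ≥ 0 satisfy: (i) either a·∫₀^∞ h/(N₀W + I) dμ(I) ≤ V + γ* and P* = 0, or P* > 0 and a·∫₀^∞ h/(N₀W + I + P*·h) dμ(I) = V + γ*; (ii) κ(f*)³ + P* ≤ Pmax; and (iii) γ* = 0 if κ(f*)³ + P* < Pmax, while κ(f*)³ + P* = Pmax if γ* > 0. Then (f*, P*) is a global minimizer of F over the feasible set. -/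

import Mathlib

open MeasureTheory

/-!
Adding `γ*` times the power constraint to the objective decouples the two variables. The CPU part
is the cubic `κ(V + γ*)f³ − bf`, whose excess over its value at `f*` is
`κ(V + γ*)(f − f*)²(f + 2f*)`. The mean rate is concave in `P`, so the transmission part lies above
its tangent line at `P*`, whose slope is, by stationarity, `0` if `P* > 0` and nonnegative if
`P* = 0`. Complementary slackness then transfers minimality of the Lagrangian to the constrained
problem.
-/

theorem isMinOn_inter_of_isMinOn_lagrangian {α 𝕜 : Type*} [Ring 𝕜] [PartialOrder 𝕜]
    [IsOrderedRing 𝕜] {F g : α → 𝕜} {s : Set α} {x₀ : α} {γ c : 𝕜} (hγ : 0 ≤ γ)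
    (hactive : 0 < γ → g x₀ = c) (hmin : IsMinOn (fun x => F x + γ * g x) s x₀) :
    IsMinOn F (s ∩ {x | g x ≤ c}) x₀ := by
  refine isMinOn_iff.mpr fun x ⟨hxs, hxc⟩ => ?_
  have hpenalty : γ * g x ≤ γ * g x₀ := by
    rcases hγ.eq_or_lt with rfl | hpos
    · simp
    · exact mul_le_mul_of_nonneg_left (hxc.trans_eq (hactive hpos).symm) hγ
  exact le_of_add_le_add_right
    ((isMinOn_iff.mp hmin x hxs).trans (add_le_add_right hpenalty (F x)))

theorem isMinOn_prod_add {α β M : Type*} [AddCommMonoid M] [PartialOrder M] [IsOrderedAddMonoid M]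
    {u : α → M} {v : β → M} {s : Set α} {t : Set β} {x₀ : α} {y₀ : β}
    (hu : IsMinOn u s x₀) (hv : IsMinOn v t y₀) :
    IsMinOn (fun p : α × β => u p.1 + v p.2) (s ×ˢ t) (x₀, y₀) :=
  isMinOn_iff.mpr fun p hp =>
    add_le_add (isMinOn_iff.mp hu p.1 hp.1) (isMinOn_iff.mp hv p.2 hp.2)

theorem isMinOn_Ici_mul_cube_sub_mul {b c : ℝ} (hb : 0 ≤ b) (hc : 0 < c) :
    IsMinOn (fun f => c * f ^ 3 - b * f) (Set.Ici 0) √(b / (3 * c)) := by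
  refine isMinOn_iff.mpr fun f (hf : 0 ≤ f) => ?_
  set f₀ := √(b / (3 * c))
  have hb_eq : b = 3 * c * f₀ ^ 2 := by
    rw [Real.sq_sqrt (by positivity)]
    field_simp
  have hexcess : c * f ^ 3 - b * f - (c * f₀ ^ 3 - b * f₀) = c * (f - f₀) ^ 2 * (f + 2 * f₀) := by
    rw [hb_eq]
    ring
  have hexcess_nonneg : 0 ≤ c * (f - f₀) ^ 2 * (f + 2 * f₀) := by positivity
  exact sub_nonneg.mp (hexcess ▸ hexcess_nonneg)

theorem log_sub_log_le_sub_div {x y : ℝ} (hx : 0 < x) (hy : 0 < y) :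
    Real.log x - Real.log y ≤ (x - y) / y := by
  rw [← Real.log_div hx.ne' hy.ne', sub_div, div_self hy.ne']
  exact Real.log_le_sub_one_of_pos (div_pos hx hy)

theorem log_one_add_mul_div_sub_le {h n P Q : ℝ} (hh : 0 ≤ h) (hn : 0 < n) (hP : 0 ≤ P)
    (hQ : 0 ≤ Q) :
    Real.log (1 + Q * h / n) - Real.log (1 + P * h / n) ≤ (Q - P) * (h / (n + P * h)) := by
  have hslope : (1 + Q * h / n - (1 + P * h / n)) / (1 + P * h / n) =
      (Q - P) * (h / (n + P * h)) := by
    have : n + P * h ≠ 0 := by positivity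
    field_simp
    ring
  exact (log_sub_log_le_sub_div (by positivity) (by positivity)).trans_eq hslope

section Rate

variable {Ω : Type*} [MeasurableSpace Ω] {μ : Measure Ω}

theorem integrable_log_one_add {u : Ω → ℝ} (hu : 0 ≤ᵐ[μ] u) (hint : Integrable u μ) :
    Integrable (fun ω => Real.log (1 + u ω)) μ := by
  refine hint.mono (hint.aemeasurable.const_add 1).log.aestronglyMeasurable ?_
  filter_upwards [hu] with ω (hω : 0 ≤ u ω)
  rw [Real.norm_of_nonneg (Real.log_nonneg (by linarith)), Real.norm_of_nonneg hω]
  linarith [Real.log_le_sub_one_of_pos (show 0 < 1 + u ω by linarith)]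

theorem integrable_const_div_of_ae_le [IsFiniteMeasure μ] {N : Ω → ℝ} {c : ℝ} (hc : 0 < c)
    (hN : AEMeasurable N μ) (hcN : ∀ᵐ ω ∂μ, c ≤ N ω) (h : ℝ) :
    Integrable (fun ω => h / N ω) μ := by
  refine Integrable.of_bound (hN.const_div h).aestronglyMeasurable (|h| / c) ?_
  filter_upwards [hcN] with ω hω
  rw [norm_div, Real.norm_eq_abs, Real.norm_of_nonneg (hc.le.trans hω)]
  gcongr

/-- The mean rate `∫ ln(1 + Ph/N) dμ`, in nats per unit bandwidth, achieved at transmit power `P`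
over a channel of gain `h` with random noise plus interference `N`. -/
noncomputable def meanRate (μ : Measure Ω) (N : Ω → ℝ) (h P : ℝ) : ℝ :=
  ∫ ω, Real.log (1 + P * h / N ω) ∂μ

/-- The marginal rate `∫ h/(N + Ph) dμ`: the derivative of `meanRate` in `P`, taken under the
integral sign. It is the slope of the tangent line bounding `meanRate` from above. -/
noncomputable def marginalRate (μ : Measure Ω) (N : Ω → ℝ) (h P : ℝ) : ℝ :=
  ∫ ω, h / (N ω + P * h) ∂μ

variable {N : Ω → ℝ} {h : ℝ}

theorem integrable_log_one_add_mul_div (hh : 0 ≤ h) (hN : ∀ᵐ ω ∂μ, 0 < N ω)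
    (hint : Integrable (fun ω => h / N ω) μ) {P : ℝ} (hP : 0 ≤ P) :
    Integrable (fun ω => Real.log (1 + P * h / N ω)) μ := by
  refine integrable_log_one_add (u := fun ω => P * h / N ω) ?_ ?_
  · filter_upwards [hN] with ω hω
    exact div_nonneg (mul_nonneg hP hh) hω.le
  · simpa only [mul_div_assoc] using hint.const_mul P

theorem integrable_div_add_mul (hh : 0 ≤ h) (hN : ∀ᵐ ω ∂μ, 0 < N ω)
    (hint : Integrable (fun ω => h / N ω) μ) {P : ℝ} (hP : 0 ≤ P) :
    Integrable (fun ω => h / (N ω + P * h)) μ := by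
  -- Measurability comes from `h / (N + P h) = s / (1 + P s)` with `s = h / N`.
  have hs : Integrable (fun ω => h / N ω / (1 + P * (h / N ω))) μ := by
    refine hint.mono (hint.aemeasurable.div
      ((hint.aemeasurable.const_mul P).const_add 1)).aestronglyMeasurable ?_
    filter_upwards [hN] with ω hω
    have hden : 1 ≤ 1 + P * (h / N ω) := le_add_of_nonneg_right (by positivity)
    rw [norm_div, Real.norm_of_nonneg (zero_le_one.trans hden)]
    exact div_le_self (norm_nonneg _) hden
  refine hs.congr ?_
  filter_upwards [hN] with ω hω
  have : N ω + P * h ≠ 0 := by positivity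
  field_simp

theorem meanRate_sub_le (hh : 0 ≤ h) (hN : ∀ᵐ ω ∂μ, 0 < N ω)
    (hint : Integrable (fun ω => h / N ω) μ) {P Q : ℝ} (hP : 0 ≤ P) (hQ : 0 ≤ Q) :
    meanRate μ N h Q - meanRate μ N h P ≤ (Q - P) * marginalRate μ N h P := by
  have hintP := integrable_log_one_add_mul_div hh hN hint hP
  have hintQ := integrable_log_one_add_mul_div hh hN hint hQ
  rw [meanRate, meanRate, marginalRate, ← integral_sub hintQ hintP, ← integral_const_mul]
  refine integral_mono_ae (hintQ.sub hintP)
    ((integrable_div_add_mul hh hN hint hP).const_mul _) ?_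
  filter_upwards [hN] with ω hω
  exact log_one_add_mul_div_sub_le hh hω hP hQ

theorem isMinOn_Ici_mul_sub_mul_meanRate (hh : 0 ≤ h) (hN : ∀ᵐ ω ∂μ, 0 < N ω)
    (hint : Integrable (fun ω => h / N ω) μ) {a w P : ℝ} (ha : 0 ≤ a)
    (hstat : (a * marginalRate μ N h 0 ≤ w ∧ P = 0) ∨ (0 < P ∧ a * marginalRate μ N h P = w)) :
    IsMinOn (fun Q => w * Q - a * meanRate μ N h Q) (Set.Ici 0) P := by
  refine isMinOn_iff.mpr fun Q (hQ : 0 ≤ Q) => ?_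
  have hP : 0 ≤ P := hstat.elim (fun hzero => hzero.2.ge) fun hpos => hpos.1.le
  have htangent : a * (meanRate μ N h Q - meanRate μ N h P) ≤
      a * ((Q - P) * marginalRate μ N h P) :=
    mul_le_mul_of_nonneg_left (meanRate_sub_le hh hN hint hP hQ) ha
  have hslope : a * marginalRate μ N h P * (Q - P) ≤ w * (Q - P) := by
    rcases hstat with ⟨hle, rfl⟩ | ⟨-, heq⟩
    · exact mul_le_mul_of_nonneg_right hle (sub_nonneg.mpr hQ)
    · rw [heq]
  linarith

theorem stmt_0_general {V κ b a Pmax γ f₀ P₀ : ℝ} (hκ : 0 < κ) (hb : 0 ≤ b) (ha : 0 ≤ a)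
    (hh : 0 ≤ h) (hN : ∀ᵐ ω ∂μ, 0 < N ω) (hint : Integrable (fun ω => h / N ω) μ)
    (hγ : 0 ≤ γ) (hVγ : 0 < V + γ) (hf₀ : f₀ = √(b / (3 * κ * (V + γ))))
    (hstat : (a * marginalRate μ N h 0 ≤ V + γ ∧ P₀ = 0) ∨
      (0 < P₀ ∧ a * marginalRate μ N h P₀ = V + γ))
    (hactive : 0 < γ → κ * f₀ ^ 3 + P₀ = Pmax) :
    IsMinOn (fun x : ℝ × ℝ => V * κ * x.1 ^ 3 + V * x.2 - b * x.1 - a * meanRate μ N h x.2)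
      (Set.Ici 0 ×ˢ Set.Ici 0 ∩ {x | κ * x.1 ^ 3 + x.2 ≤ Pmax}) (f₀, P₀) := by
  refine isMinOn_inter_of_isMinOn_lagrangian hγ hactive ?_
  have hcpu : IsMinOn (fun f => κ * (V + γ) * f ^ 3 - b * f) (Set.Ici 0) f₀ := by
    rw [hf₀, mul_assoc 3]
    exact isMinOn_Ici_mul_cube_sub_mul hb (mul_pos hκ hVγ)
  have hpower := isMinOn_Ici_mul_sub_mul_meanRate hh hN hint ha hstat
  convert isMinOn_prod_add hcpu hpower using 2
  ring

end Rate

/-- Lemma 1 (sufficiency of the KKT conditions): the UE's per-slot power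
minimization: minimize `F f P = Vκf³ + VP − b·f − a·∫ log(1 + P·h/(N₀W + I)) dμ(I)`
over `f ≥ 0, P ≥ 0` with `κf³ + P ≤ Pmax`.  The KKT point `(f*, P*)` with
multiplier `γ*` is a global minimizer. -/
theorem stmt_0
    (V κ b a h NW Pmax : ℝ)
    (hV : 0 ≤ V) (hκ : 0 < κ) (hb : 0 < b) (ha : 0 ≤ a)
    (hh : 0 < h) (hNW : 0 < NW) (hPmax : 0 < Pmax)
    (μ : Measure ℝ) [IsProbabilityMeasure μ] (hμ : μ (Set.Iio 0) = 0)
    (F : ℝ → ℝ → ℝ)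
    (hF : ∀ f P : ℝ, F f P =
      V * κ * f ^ 3 + V * P - b * f
        - a * ∫ I, Real.log (1 + P * h / (NW + I)) ∂μ)
    (γs fs Ps : ℝ)
    (hγs : 0 ≤ γs) (hVγ : 0 < V + γs)
    (hfs : fs = Real.sqrt (b / (3 * κ * (V + γs))))
    (hPs : 0 ≤ Ps)
    (hstat : (a * ∫ I, h / (NW + I) ∂μ ≤ V + γs ∧ Ps = 0) ∨
      (0 < Ps ∧ a * ∫ I, h / (NW + I + Ps * h) ∂μ = V + γs))
    (hfeas : κ * fs ^ 3 + Ps ≤ Pmax)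
    (hslack : κ * fs ^ 3 + Ps < Pmax → γs = 0)
    (hactive : 0 < γs → κ * fs ^ 3 + Ps = Pmax) :
    ∀ f P : ℝ, 0 ≤ f → 0 ≤ P → κ * f ^ 3 + P ≤ Pmax → F fs Ps ≤ F f P := by
  have hI : ∀ᵐ I ∂μ, NW ≤ NW + I :=
    (measure_eq_zero_iff_ae_notMem.mp hμ).mono fun I hI => le_add_of_nonneg_right (not_lt.mp hI)
  have hint := integrable_const_div_of_ae_le hNW (by fun_prop) hI h
  have hmin := stmt_0_general hκ hb.le ha hh.le (hI.mono fun _ => hNW.trans_le) hint hγs hVγ hfs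
    (by simpa only [marginalRate, zero_mul, add_zero] using hstat) hactive
  intro f P hf hP hfP
  simpa only [hF, meanRate] using isMinOn_iff.mp hmin (f, P) ⟨⟨hf, hP⟩, hfP⟩
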